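/- arXiv:1505.06908 — 6 statements merged into one kernel-verified Lean document; each statement's English description precedes it below -/
import Mathlib

section
/- Let f : ℂ → ℂ be an entire function of exponential type τ > 0 whose restriction to the real line is integrable, with ∫_{-∞}^{∞} |f(x)| dx = M < ∞. Then for every real number a with |a| > τ, the Fourier integral vanishes: ∫_{-∞}^{∞} e^{i a x} f(x) dx = 0. -/
open MeasureTheory Real Complex

/-- `f` is (entire) of exponential type `τ`. -/
def ExpType (τ : ℝ) (f : ℂ → ℂ) : Prop :=
  ∀ ε > 0, ∃ R > 0, ∀ z : ℂ, R ≤ ‖z‖ → ‖f z‖ ≤ Real.exp ((τ + ε) * ‖z‖)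

open Filter Topology Set

/-- Global exponential bound. -/
lemma expType_global (f : ℂ → ℂ) (τ b : ℝ) (hf : Continuous f) (h : ExpType τ f) (hb : τ < b)
    (hb0 : 0 ≤ b) : ∃ C ≥ 0, ∀ z, ‖f z‖ ≤ C * Real.exp (b * ‖z‖) := by
  obtain ⟨R, hR, hR'⟩ := h (b - τ) (by linarith)
  obtain ⟨C, hC⟩ := (isCompact_closedBall (0 : ℂ) R).exists_bound_of_continuousOn hf.continuousOn
  refine ⟨max C 1, le_trans zero_le_one (le_max_right _ _), fun z => ?_⟩
  rcases le_total R ‖z‖ with hz | hz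
  · refine (hR' z hz).trans ?_
    rw [show τ + (b - τ) = b by ring]
    exact le_mul_of_one_le_left (Real.exp_pos _).le (le_max_right _ _)
  · have h1 := hC z (by simpa using hz)
    have h2 : 1 ≤ Real.exp (b * ‖z‖) := Real.one_le_exp (by positivity)
    have h3 : (0 : ℝ) ≤ max C 1 := le_trans zero_le_one (le_max_right _ _)
    nlinarith [le_max_left C 1]

/-- Phragmen-Lindelof in the upper half plane. -/
lemma upper_bound (G : ℂ → ℂ) (hG : Differentiable ℂ G) (C b M : ℝ)
    (hC : ∀ z, ‖G z‖ ≤ C * Real.exp (b * ‖z‖)) (hM : ∀ x : ℝ, ‖G x‖ ≤ M) (z : ℂ)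
    (hz : 0 ≤ z.im) : ‖G z‖ ≤ M * Real.exp (b * z.im) := by
  have hC0 : 0 ≤ C := by have := (norm_nonneg _).trans (hC 0); simpa using this
  have key : ‖(fun w : ℂ => G (I * w) * Complex.exp (-b * w)) (-I * z)‖ ≤ M := by
    apply PhragmenLindelof.right_half_plane_of_bounded_on_real
      (f := fun w : ℂ => G (I * w) * Complex.exp (-b * w))
    · apply Differentiable.diffContOnCl
      fun_prop
    · refine ⟨1, by norm_num, |b| + |b|, Asymptotics.IsBigO.of_bound C ?_⟩
      refine Filter.Eventually.of_forall fun w => ?_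
      rw [norm_mul, Complex.norm_exp, Real.norm_eq_abs, Real.abs_exp, Real.rpow_one, add_mul,
        Real.exp_add, ← mul_assoc]
      have h1 := hC (I * w)
      rw [norm_mul, Complex.norm_I, one_mul] at h1
      have h2 : b * ‖w‖ ≤ |b| * ‖w‖ := by gcongr; exact le_abs_self b
      have h3 : (-(b : ℂ) * w).re ≤ |b| * ‖w‖ := by
        refine (Complex.re_le_norm _).trans ?_
        simp
      calc _ ≤ (C * Real.exp (b * ‖w‖)) * Real.exp (|b| * ‖w‖) := by gcongr
        _ ≤ _ := by gcongr
    · refine ⟨C, ?_⟩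
      rw [Filter.eventually_map]
      filter_upwards [eventually_ge_atTop 0] with x hx
      have h1 := hC (I * x)
      rw [norm_mul, Complex.norm_I, one_mul, Complex.norm_real, Real.norm_of_nonneg hx] at h1
      rw [norm_mul, Complex.norm_exp]
      have : (-(b : ℂ) * x).re = - (b * x) := by simp
      rw [this, Real.exp_neg, ← div_eq_mul_inv, div_le_iff₀ (Real.exp_pos _)]
      exact h1
    · intro x
      have h1 := hM (-x)
      rw [norm_mul, Complex.norm_exp]
      have h2 : (-(b : ℂ) * (x * I)).re = 0 := by simp
      have h3 : I * (x * I) = ((-x : ℝ) : ℂ) := by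
        push_cast; linear_combination (x : ℂ) * Complex.I_mul_I
      rw [h2, h3, Real.exp_zero, mul_one]
      exact h1
    · simpa using hz
  have h3 : I * (-I * z) = z := by linear_combination (-z) * Complex.I_mul_I
  have h4 : (-(b : ℂ) * (-I * z)).re = -(b * z.im) := by simp
  simp only [norm_mul, Complex.norm_exp, h3, h4] at key
  rwa [Real.exp_neg, ← div_eq_mul_inv, div_le_iff₀ (Real.exp_pos _)] at key

/-- The integrable function of exponential type is dominated in the upper half plane. -/
lemma f_upper (f : ℂ → ℂ) (τ b : ℝ) (hτ : 0 < τ) (hb : τ < b) (hent : Differentiable ℂ f)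
    (htype : ExpType τ f) (hint : Integrable (fun x : ℝ => f (x : ℂ))) :
    ∃ K, ∀ z : ℂ, 0 ≤ z.im → ‖f z‖ ≤ K * Real.exp (b * z.im) := by
  obtain ⟨G, hG0, hG⟩ := (Complex.IsConservativeOn.isExactOn_univ hent.continuous
    hent.differentiableOn.isConservativeOn).with_val_at 0 0
  replace hG : ∀ z, HasDerivAt G (f z) z := fun z => hG z (mem_univ z)
  have hGd : Differentiable ℂ G := fun z => (hG z).differentiableAt
  obtain ⟨C, hC0, hC⟩ := expType_global f τ ((τ + b) / 2) hent.continuous htype (by linarith)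
    (by linarith)
  set δ := (b - τ) / 2 with hδ
  have hδ0 : 0 < δ := by rw [hδ]; linarith
  have hGb : ∀ z, ‖G z‖ ≤ (C / δ) * Real.exp (b * ‖z‖) := by
    intro z
    have h1 := (convex_closedBall (0 : ℂ) ‖z‖).norm_image_sub_le_of_norm_hasDerivWithin_le
      (f := G) (f' := f) (C := C * Real.exp ((τ + b) / 2 * ‖z‖)) (x := 0) (y := z)
      (fun x _ => (hG x).hasDerivWithinAt)
      (fun x hx => (hC x).trans (by
        have hx' : ‖x‖ ≤ ‖z‖ := by simpa using hx
        have hp : 0 ≤ (τ + b) / 2 := by linarith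
        gcongr)) (by simp) (by simp)
    rw [hG0, sub_zero, sub_zero] at h1
    refine h1.trans ?_
    have h2 : ‖z‖ ≤ Real.exp (δ * ‖z‖) / δ := by
      rw [le_div_iff₀ hδ0]
      linarith [Real.add_one_le_exp (δ * ‖z‖)]
    have h3 : Real.exp (b * ‖z‖) = Real.exp ((τ + b) / 2 * ‖z‖) * Real.exp (δ * ‖z‖) := by
      rw [← Real.exp_add]; congr 1; rw [hδ]; ring
    rw [h3]
    calc _ ≤ C * Real.exp ((τ + b) / 2 * ‖z‖) * (Real.exp (δ * ‖z‖) / δ) := by gcongr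
      _ = _ := by ring
  set M := ∫ x : ℝ, ‖f (x : ℂ)‖ with hMdef
  have hM0 : 0 ≤ M := integral_nonneg fun _ => norm_nonneg _
  have hGM : ∀ x : ℝ, ‖G x‖ ≤ M := by
    intro x
    have h1 : ∫ t in (0 : ℝ)..x, f (t : ℂ) = G x - G (0 : ℝ) :=
      intervalIntegral.integral_eq_sub_of_hasDerivAt (f := fun t : ℝ => G t)
        (fun t _ => (hG t).comp_ofReal) hint.intervalIntegrable
    rw [Complex.ofReal_zero, hG0, sub_zero] at h1
    rw [← h1]
    refine intervalIntegral.norm_integral_le_integral_norm_uIoc.trans ?_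
    exact setIntegral_le_integral hint.norm (Filter.Eventually.of_forall fun _ => norm_nonneg _)
  have hup := upper_bound G hGd _ b M hGb hGM
  have hlow := upper_bound (fun z => G (-z)) (by fun_prop) (C / δ) b M
    (fun z => by simpa using hGb (-z)) (fun x => by simpa using hGM (-x))
  refine ⟨M * Real.exp b, fun z hz => ?_⟩
  have h := Complex.norm_deriv_le_of_forall_mem_sphere_norm_le (c := z) (R := 1) (f := G)
    (C := M * Real.exp b * Real.exp (b * z.im)) one_pos hGd.diffContOnCl (fun w hw => by
      have h1 : |w.im - z.im| ≤ 1 := by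
        have := Complex.abs_im_le_norm (w - z)
        rw [Complex.sub_im] at this
        have h2 : ‖w - z‖ = 1 := by simpa [dist_eq_norm] using hw
        linarith
      rw [abs_le] at h1
      rw [mul_assoc, ← Real.exp_add]
      rcases le_total 0 w.im with hw0 | hw0
      · refine (hup w hw0).trans ?_
        gcongr
        nlinarith
      · have := hlow (-w) (by simpa using hw0)
        simp only [neg_neg, Complex.neg_im] at this
        refine this.trans ?_
        gcongr
        nlinarith)
  rw [(hG z).deriv, div_one] at h
  exact h

lemma norm_reg_ge (ε : ℝ) (hε : 0 < ε) (z : ℂ) (hz : 0 ≤ z.im) :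
    1 ≤ ‖1 - I * ε * z‖ ∧ ε * |z.re| ≤ ‖1 - I * ε * z‖ ∧ ε * z.im ≤ ‖1 - I * ε * z‖ := by
  have hre : (1 - I * ε * z).re = 1 + ε * z.im := by simp
  have him : (1 - I * ε * z).im = - (ε * z.re) := by simp
  have h1 := Complex.re_le_norm (1 - I * ε * z)
  have h2 := Complex.abs_im_le_norm (1 - I * ε * z)
  rw [hre] at h1
  rw [him, abs_neg, abs_mul, abs_of_pos hε] at h2
  have : 0 ≤ ε * z.im := by positivity
  exact ⟨by linarith, h2, by linarith⟩

/-- Vanishing of the regularized integral. -/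
lemma reg_zero (g : ℂ → ℂ) (hg : Differentiable ℂ g) (K : ℝ)
    (hK : ∀ z : ℂ, 0 ≤ z.im → ‖g z‖ ≤ K) (ε : ℝ) (hε : 0 < ε)
    (hint : Integrable (fun x : ℝ => g x / (1 - I * ε * x) ^ 2)) :
    ∫ x : ℝ, g x / (1 - I * ε * x) ^ 2 = 0 := by
  set k : ℂ → ℂ := fun z => g z / (1 - I * ε * z) ^ 2 with hk
  have hK0 : 0 ≤ K := (norm_nonneg _).trans (hK 0 (by simp))
  have hkb : ∀ R > 0, ∀ z : ℂ, 0 ≤ z.im → (R ≤ |z.re| ∨ R ≤ z.im) → ‖k z‖ ≤ K / (ε * R) ^ 2 := by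
    intro R hR z hz h
    obtain ⟨_, h2, h3⟩ := norm_reg_ge ε hε z hz
    have h4 : ε * R ≤ ‖1 - I * ε * z‖ := by
      rcases h with h | h
      · exact (mul_le_mul_of_nonneg_left h hε.le).trans h2
      · exact (mul_le_mul_of_nonneg_left h hε.le).trans h3
    rw [hk]
    simp only [norm_div, norm_pow]
    have := hK z hz
    gcongr
  have hrect : ∀ R > 0, ‖∫ x in (-R)..R, k (x : ℝ)‖ ≤ (4 * K / ε ^ 2) * R⁻¹ := by
    intro R hR
    have h0 := Complex.integral_boundary_rect_eq_zero_of_differentiableOn k (-R : ℝ)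
      ((R : ℝ) + (R : ℝ) * I) (by
        intro z hz
        have hz' : 0 ≤ z.im := by
          have := hz.2
          simp only [mem_preimage] at this
          simp [uIcc_of_le hR.le] at this
          exact this.1
        have h1 := (norm_reg_ge ε hε z hz').1
        have h2 : (1 - I * ε * z) ^ 2 ≠ 0 := by
          apply pow_ne_zero
          intro h
          rw [h, norm_zero] at h1
          linarith
        apply DifferentiableAt.differentiableWithinAt
        rw [hk]
        exact (hg z).div (by fun_prop) h2)
    simp only [Complex.ofReal_re, Complex.ofReal_im, Complex.add_re, Complex.add_im,
      Complex.mul_re, Complex.mul_im, Complex.I_re, Complex.I_im, mul_zero, mul_one, zero_mul,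
      sub_zero, add_zero, zero_add, Complex.ofReal_zero] at h0
    have ht : ‖∫ x in (-R)..R, k ((x : ℝ) + R * I)‖ ≤ K / (ε * R) ^ 2 * |R - (-R)| :=
      intervalIntegral.norm_integral_le_of_norm_le_const fun x _ =>
        hkb R hR _ (by simpa using hR.le) (Or.inr (by simp))
    have hs1 : ‖∫ y in (0 : ℝ)..R, k ((R : ℂ) + (y : ℝ) * I)‖ ≤ K / (ε * R) ^ 2 * |R - 0| :=
      intervalIntegral.norm_integral_le_of_norm_le_const fun y hy => by
        rw [uIoc_of_le hR.le] at hy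
        exact hkb R hR _ (by simpa using hy.1.le) (Or.inl (by simp [le_abs_self]))
    have hs2 : ‖∫ y in (0 : ℝ)..R, k (((-R : ℝ) : ℂ) + (y : ℝ) * I)‖
        ≤ K / (ε * R) ^ 2 * |R - 0| :=
      intervalIntegral.norm_integral_le_of_norm_le_const fun y hy => by
        rw [uIoc_of_le hR.le] at hy
        exact hkb R hR _ (by simpa using hy.1.le) (Or.inl (by simp [le_abs_self]))
    rw [sub_zero, abs_of_pos hR] at hs1 hs2
    rw [sub_neg_eq_add, abs_of_pos (by linarith)] at ht
    set A := ∫ x in (-R)..R, k (x : ℝ)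
    set T := ∫ x in (-R)..R, k ((x : ℝ) + R * I)
    set S1 := ∫ y in (0 : ℝ)..R, k ((R : ℂ) + (y : ℝ) * I)
    set S2 := ∫ y in (0 : ℝ)..R, k (((-R : ℝ) : ℂ) + (y : ℝ) * I)
    have hA : A = T - I • S1 + I • S2 := by linear_combination h0
    rw [hA]
    calc _ ≤ ‖T‖ + ‖I • S1‖ + ‖I • S2‖ := (norm_add_le _ _).trans (by gcongr; exact norm_sub_le _ _)
      _ = ‖T‖ + ‖S1‖ + ‖S2‖ := by simp
      _ ≤ K / (ε * R) ^ 2 * (R + R) + K / (ε * R) ^ 2 * R + K / (ε * R) ^ 2 * R := by gcongr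
      _ = _ := by field_simp; ring
  have hlim := intervalIntegral_tendsto_integral hint tendsto_neg_atTop_atBot tendsto_id
  refine tendsto_nhds_unique hlim ?_
  have hz : Tendsto (fun R : ℝ => (4 * K / ε ^ 2) * R⁻¹) atTop (𝓝 0) := by
    have h := (tendsto_inv_atTop_zero (𝕜 := ℝ)).const_mul (4 * K / ε ^ 2)
    rwa [mul_zero] at h
  refine squeeze_zero_norm' ?_ hz
  filter_upwards [eventually_gt_atTop 0] with R hR
  exact hrect R hR

lemma main_pos (f : ℂ → ℂ) (τ : ℝ) (hτ : 0 < τ) (hent : Differentiable ℂ f)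
    (htype : ExpType τ f) (hint : Integrable (fun x : ℝ => f (x : ℂ)))
    (a : ℝ) (ha : τ < a) :
    ∫ x : ℝ, Complex.exp (I * a * x) * f (x : ℂ) = 0 := by
  obtain ⟨K, hK⟩ := f_upper f τ a hτ ha hent htype hint
  set g : ℂ → ℂ := fun z => Complex.exp (I * a * z) * f z with hg
  have hgd : Differentiable ℂ g := by rw [hg]; fun_prop
  have hgn : ∀ z : ℂ, ‖g z‖ = Real.exp (-(a * z.im)) * ‖f z‖ := by
    intro z
    have : (I * a * z).re = -(a * z.im) := by simp
    rw [hg]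
    simp only [norm_mul, Complex.norm_exp, this]
  have hgK : ∀ z : ℂ, 0 ≤ z.im → ‖g z‖ ≤ K := by
    intro z hz
    rw [hgn, Real.exp_neg, inv_mul_le_iff₀ (Real.exp_pos _), mul_comm]
    exact hK z hz
  have hgr : ∀ x : ℝ, ‖g x‖ = ‖f x‖ := fun x => by rw [hgn]; simp
  have hbound : ∀ ε : ℝ, ε > 0 → ∀ x : ℝ, ‖g x / (1 - I * ε * x) ^ 2‖ ≤ ‖f x‖ := by
    intro ε hε x
    have h1 := (norm_reg_ge ε hε x (by simp)).1
    rw [norm_div, norm_pow, hgr]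
    exact div_le_self (norm_nonneg _) (one_le_pow₀ h1)
  have hcont : ∀ ε : ℝ, ε > 0 → Continuous fun x : ℝ => g x / (1 - I * (ε : ℝ) * x) ^ 2 := by
    intro ε hε
    refine Continuous.div (hgd.continuous.comp Complex.continuous_ofReal) (by fun_prop) ?_
    intro x h
    have h1 := (norm_reg_ge ε hε x (by simp)).1
    rw [pow_eq_zero_iff two_ne_zero] at h
    rw [h, norm_zero] at h1
    linarith
  have hpos : ∀ n : ℕ, (0 : ℝ) < 1 / ((n : ℝ) + 1) := fun n => by positivity
  have hzero : ∀ n : ℕ, ∫ x : ℝ, g x / (1 - I * ((1 / ((n : ℝ) + 1) : ℝ) : ℂ) * x) ^ 2 = 0 :=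
    fun n => reg_zero g hgd K hgK _ (hpos n) (hint.norm.mono'
      (hcont _ (hpos n)).aestronglyMeasurable
      (Filter.Eventually.of_forall (hbound _ (hpos n))))
  have hlim : Tendsto (fun n : ℕ => ∫ x : ℝ, g x / (1 - I * ((1 / ((n : ℝ) + 1) : ℝ) : ℂ) * x) ^ 2)
      atTop (𝓝 (∫ x : ℝ, g x)) := by
    refine tendsto_integral_of_dominated_convergence (fun x => ‖f x‖)
      (fun n => (hcont _ (hpos n)).aestronglyMeasurable) hint.norm
      (fun n => Filter.Eventually.of_forall (hbound _ (hpos n)))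
      (Filter.Eventually.of_forall fun x => ?_)
    have hc : ContinuousAt (fun ε : ℝ => g x / (1 - I * (ε : ℂ) * x) ^ 2) 0 := by
      refine ContinuousAt.div (by fun_prop) (by fun_prop) (by simp)
    have := hc.tendsto.comp tendsto_one_div_add_atTop_nhds_zero_nat
    simpa [Function.comp_def] using this
  simp only [hzero] at hlim
  exact (tendsto_nhds_unique hlim tendsto_const_nhds)

/-- **Vanishing Fourier transform lemma.** If `f` is an entire function of exponential
type `τ > 0` whose restriction to the real line is integrable, then the Fourier
integral `∫ e^{iax} f(x) dx` vanishes for every real `a` with `|a| > τ`. -/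
theorem fourier_integral_eq_zero_of_expType
    (f : ℂ → ℂ) (τ : ℝ) (hτ : 0 < τ)
    (hent : Differentiable ℂ f)
    (htype : ExpType τ f)
    (M : ℝ) (hM : ∫ x : ℝ, ‖f (x : ℂ)‖ = M)
    (hint : Integrable (fun x : ℝ => f (x : ℂ)))
    (a : ℝ) (ha : τ < |a|) :
    ∫ x : ℝ, Complex.exp (Complex.I * a * x) * f (x : ℂ) = 0 := by
  rcases lt_abs.1 ha with h | h
  · exact main_pos f τ hτ hent htype hint a h
  · have h1 := main_pos (fun z => f (-z)) τ hτ (by fun_prop)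
      (fun ε hε => by
        obtain ⟨R, hR, hR'⟩ := htype ε hε
        exact ⟨R, hR, fun z hz => by simpa using hR' (-z) (by simpa using hz)⟩)
      (by simpa using hint.comp_neg) (-a) h
    rw [← integral_neg_eq_self]
    simpa using h1
end

section
/- Let f : ℂ → ℂ be an entire function and let γ > 0. Suppose that for every y ∈ [0, γ] the function x ↦ f(x + iy) is integrable on ℝ, and that sup_{0 ≤ y ≤ γ} |f(x + iy)| → 0 as |x| → ∞. Then for every real a, ∫_{-∞}^{∞} e^{i a x} f(x) dx = e^{-aγ} ∫_{-∞}^{∞} e^{i a x} f(x + iγ) dx. -/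
open MeasureTheory Real Complex

/-- **Contour-shift identity.** For an entire function `f` that is integrable on every
horizontal line at height `y ∈ [0, γ]` and decays (uniformly in `y ∈ [0, γ]`) as
`|x| → ∞`, the Fourier integral along the real line equals `e^{-aγ}` times the Fourier
integral along the line at height `γ`. -/
theorem fourier_integral_contour_shift
    (f : ℂ → ℂ) (γ : ℝ) (hγ : 0 < γ)
    (hent : Differentiable ℂ f)
    (hint : ∀ y ∈ Set.Icc (0 : ℝ) γ,
      Integrable (fun x : ℝ => f ((x : ℂ) + y * Complex.I)))
    (hdecay : ∀ ε > 0, ∃ X : ℝ, ∀ x : ℝ, X ≤ |x| →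
      ∀ y ∈ Set.Icc (0 : ℝ) γ, ‖f ((x : ℂ) + y * Complex.I)‖ ≤ ε)
    (a : ℝ) :
    ∫ x : ℝ, Complex.exp (Complex.I * a * x) * f (x : ℂ)
      = Complex.exp (-(a * γ)) *
        ∫ x : ℝ, Complex.exp (Complex.I * a * x) * f ((x : ℂ) + γ * Complex.I) := by
  have hnorm : ∀ x y : ℝ, ‖Complex.exp (Complex.I * a * ((x : ℂ) + y * Complex.I))‖
      = Real.exp (-(a * y)) := by
    intro x y
    rw [Complex.norm_exp]
    congr 1
    simp
  set g : ℂ → ℂ := fun z => Complex.exp (Complex.I * a * z) * f z with hg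
  have hgd : Differentiable ℂ g := by
    intro z
    have h1 := hent z
    simp only [hg]
    fun_prop
  have hgint : ∀ y ∈ Set.Icc (0 : ℝ) γ,
      Integrable (fun x : ℝ => g ((x : ℂ) + y * Complex.I)) := by
    intro y hy
    refine (hint y hy).bdd_mul (c := Real.exp (-(a * y))) ?_ ?_
    · exact Continuous.aestronglyMeasurable (by fun_prop)
    · exact Filter.Eventually.of_forall fun x => (hnorm x y).le
  -- a vertical edge tends to zero
  have hvert : ∀ s : ℝ → ℝ, (∀ T, |s T| = |T|) →
      Filter.Tendsto (fun T : ℝ => ∫ y : ℝ in (0 : ℝ)..γ, g ((s T : ℝ) + y * Complex.I))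
        Filter.atTop (nhds 0) := by
    intro s hs
    rw [Metric.tendsto_atTop]
    intro ε hε
    set C := Real.exp (|a| * γ) with hC
    have hCpos : 0 < C := Real.exp_pos _
    obtain ⟨X, hX⟩ := hdecay (ε / (2 * C * γ)) (by positivity)
    refine ⟨X, fun T hT => ?_⟩
    rw [dist_zero_right]
    have hb : ‖∫ y : ℝ in (0 : ℝ)..γ, g ((s T : ℝ) + y * Complex.I)‖
        ≤ (C * (ε / (2 * C * γ))) * |γ - 0| := by
      refine intervalIntegral.norm_integral_le_of_norm_le_const fun y hy => ?_
      rw [Set.uIoc_of_le hγ.le] at hy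
      simp only [hg]
      rw [norm_mul, hnorm]
      have h1 : Real.exp (-(a * y)) ≤ C := by
        apply Real.exp_le_exp.mpr
        have h2 : -a * y ≤ |a| * y := mul_le_mul_of_nonneg_right (neg_le_abs a) hy.1.le
        have h3 : |a| * y ≤ |a| * γ := mul_le_mul_of_nonneg_left hy.2 (abs_nonneg a)
        linarith
      have h4 := hX (s T) (by rw [hs]; exact hT.le.trans (le_abs_self T)) y ⟨hy.1.le, hy.2⟩
      exact mul_le_mul h1 h4 (norm_nonneg _) hCpos.le
    rw [sub_zero, abs_of_pos hγ] at hb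
    have h5 : (C * (ε / (2 * C * γ))) * γ = ε / 2 := by field_simp
    linarith
  have hv1 := hvert (fun T => T) (fun T => rfl)
  have hv2 := hvert (fun T => -T) (fun T => abs_neg T)
  have hlim : ∀ y ∈ Set.Icc (0 : ℝ) γ,
      Filter.Tendsto (fun T : ℝ => ∫ x : ℝ in (-T)..T, g ((x : ℂ) + y * Complex.I))
        Filter.atTop (nhds (∫ x : ℝ, g ((x : ℂ) + y * Complex.I))) := fun y hy =>
    intervalIntegral_tendsto_integral (hgint y hy) Filter.tendsto_neg_atTop_atBot
      Filter.tendsto_id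
  have hl0 := hlim 0 ⟨le_rfl, hγ.le⟩
  have hlγ := hlim γ ⟨hγ.le, le_rfl⟩
  have hall := ((hl0.sub hlγ).add (hv1.const_smul Complex.I)).sub (hv2.const_smul Complex.I)
  have hzero := hall.congr (f₂ := fun _ => (0 : ℂ)) (fun T => by
    have := Complex.integral_boundary_rect_eq_zero_of_differentiableOn g
      ((-T : ℝ) + (0 : ℝ) * Complex.I) ((T : ℝ) + (γ : ℝ) * Complex.I) hgd.differentiableOn
    simpa using this)
  have heq := tendsto_nhds_unique hzero tendsto_const_nhds
  have hmain : ∫ x : ℝ, g ((x : ℂ) + (0 : ℝ) * Complex.I)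
      = ∫ x : ℝ, g ((x : ℂ) + γ * Complex.I) := by
    simp only [smul_zero, add_zero, sub_zero] at heq
    exact sub_eq_zero.mp heq
  have hL : ∫ x : ℝ, Complex.exp (Complex.I * a * x) * f (x : ℂ)
      = ∫ x : ℝ, g ((x : ℂ) + (0 : ℝ) * Complex.I) := by
    simp [hg]
  rw [hL, hmain, ← integral_const_mul]
  congr 1
  funext x
  simp only [hg]
  rw [← mul_assoc, ← Complex.exp_add]
  congr 2
  linear_combination (a * γ : ℂ) * Complex.I_mul_I
end

section
/- Let f : ℂ → ℂ be an entire function, let τ ≥ 0, γ > 0 and M ≥ 0. Suppose that ∫_{-∞}^{∞} |f(x + iy)| dx ≤ M·e^{τ y} for every y ∈ [0, γ], and that sup_{0 ≤ y ≤ γ} |f(x + iy)| → 0 as |x| → ∞. Then for every real a, |∫_{-∞}^{∞} e^{i a x} f(x) dx| ≤ M·e^{-γ(a - τ)}. -/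
open MeasureTheory Real Complex

/-- **Exponential bound on the Fourier integral.** If `f` is entire, integrable on the
horizontal lines at heights `y ∈ [0, γ]` with `∫ |f(x+iy)| dx ≤ M e^{τ y}`, and decays
uniformly as `|x| → ∞`, then `|∫ e^{iax} f(x) dx| ≤ M e^{-γ(a-τ)}` for every real `a`. -/
theorem fourier_integral_bound_of_contour_shift
    (f : ℂ → ℂ) (τ γ M : ℝ) (hτ : 0 ≤ τ) (hγ : 0 < γ) (hM : 0 ≤ M)
    (hent : Differentiable ℂ f)
    (hint : ∀ y ∈ Set.Icc (0 : ℝ) γ,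
      Integrable (fun x : ℝ => f ((x : ℂ) + y * Complex.I)))
    (hbound : ∀ y ∈ Set.Icc (0 : ℝ) γ,
      (∫ x : ℝ, ‖f ((x : ℂ) + y * Complex.I)‖) ≤ M * Real.exp (τ * y))
    (hdecay : ∀ ε > 0, ∃ X : ℝ, ∀ x : ℝ, X ≤ |x| →
      ∀ y ∈ Set.Icc (0 : ℝ) γ, ‖f ((x : ℂ) + y * Complex.I)‖ ≤ ε)
    (a : ℝ) :
    ‖∫ x : ℝ, Complex.exp (Complex.I * a * x) * f (x : ℂ)‖
      ≤ M * Real.exp (-γ * (a - τ)) := by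
  set g : ℂ → ℂ := fun z => Complex.exp (Complex.I * a * z) * f z with hg
  have hgd : Differentiable ℂ g := by
    apply Differentiable.mul _ hent
    fun_prop
  have hnorm : ∀ x y : ℝ, ‖g ((x : ℂ) + y * Complex.I)‖
      = Real.exp (-(a * y)) * ‖f ((x : ℂ) + y * Complex.I)‖ := by
    intro x y
    simp only [hg, norm_mul, Complex.norm_exp]
    congr 2
    simp
  have hgint : ∀ y ∈ Set.Icc (0 : ℝ) γ,
      Integrable (fun x : ℝ => g ((x : ℂ) + y * Complex.I)) := by
    intro y hy
    refine Integrable.mono' (((hint y hy).norm).const_mul (Real.exp (-(a * y)))) ?_ ?_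
    · apply Continuous.aestronglyMeasurable
      exact hgd.continuous.comp (by fun_prop)
    · exact Filter.Eventually.of_forall fun x => (hnorm x y).le
  have h0 : (0 : ℝ) ∈ Set.Icc (0 : ℝ) γ := ⟨le_rfl, hγ.le⟩
  have h1 : γ ∈ Set.Icc (0 : ℝ) γ := ⟨hγ.le, le_rfl⟩
  have hvert : ∀ ε > 0, ∃ X : ℝ, ∀ x : ℝ, X ≤ |x| →
      ‖∫ y : ℝ in (0 : ℝ)..γ, g ((x : ℂ) + y * Complex.I)‖ ≤ ε := by
    intro ε hε
    have hC : 0 < Real.exp (|a| * γ) * γ := by positivity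
    obtain ⟨X, hX⟩ := hdecay (ε / (Real.exp (|a| * γ) * γ)) (by positivity)
    refine ⟨X, fun x hx => ?_⟩
    have := intervalIntegral.norm_integral_le_of_norm_le_const (a := 0) (b := γ)
      (f := fun y : ℝ => g ((x : ℂ) + y * Complex.I))
      (C := Real.exp (|a| * γ) * (ε / (Real.exp (|a| * γ) * γ))) (by
        intro y hy
        rw [Set.uIoc_of_le hγ.le] at hy
        rw [hnorm]
        refine mul_le_mul (Real.exp_le_exp.2 ?_) (hX x hx y ⟨hy.1.le, hy.2⟩)
          (norm_nonneg _) (Real.exp_pos _).le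
        calc -(a * y) ≤ |a| * y := by
              have := mul_le_mul_of_nonneg_right (neg_abs_le a) hy.1.le
              linarith
          _ ≤ |a| * γ := mul_le_mul_of_nonneg_left hy.2 (abs_nonneg a))
    refine this.trans (le_of_eq ?_)
    rw [sub_zero, abs_of_pos hγ]
    field_simp
  have hvtop : Filter.Tendsto (fun T : ℝ => ∫ y : ℝ in (0 : ℝ)..γ, g ((T : ℂ) + y * Complex.I))
      Filter.atTop (nhds 0) := by
    rw [Metric.tendsto_atTop]
    intro ε hε
    obtain ⟨X, hX⟩ := hvert (ε / 2) (by positivity)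
    refine ⟨X, fun T hT => ?_⟩
    rw [dist_zero_right]
    linarith [hX T (hT.trans (le_abs_self T))]
  have hvbot : Filter.Tendsto
      (fun T : ℝ => ∫ y : ℝ in (0 : ℝ)..γ, g (((-T : ℝ) : ℂ) + y * Complex.I))
      Filter.atTop (nhds 0) := by
    rw [Metric.tendsto_atTop]
    intro ε hε
    obtain ⟨X, hX⟩ := hvert (ε / 2) (by positivity)
    refine ⟨X, fun T hT => ?_⟩
    rw [dist_zero_right]
    linarith [hX (-T) (hT.trans (by rw [abs_neg]; exact le_abs_self T))]
  have hI0 := intervalIntegral_tendsto_integral (hgint 0 h0)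
    Filter.tendsto_neg_atTop_atBot Filter.tendsto_id
  have hI1 := intervalIntegral_tendsto_integral (hgint γ h1)
    Filter.tendsto_neg_atTop_atBot Filter.tendsto_id
  have hlim := ((hI0.sub hI1).add (hvtop.const_smul Complex.I)).sub
    (hvbot.const_smul Complex.I)
  have hrect : ∀ T : ℝ, _ = (0 : ℂ) := fun T =>
    Complex.integral_boundary_rect_eq_zero_of_differentiableOn g
      (⟨-T, 0⟩ : ℂ) (⟨T, γ⟩ : ℂ) hgd.differentiableOn
  have hz := tendsto_nhds_unique (hlim.congr hrect) tendsto_const_nhds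
  simp only [smul_zero, add_zero, sub_zero] at hz
  have heq : (∫ x : ℝ, Complex.exp (Complex.I * a * x) * f (x : ℂ))
      = ∫ x : ℝ, g ((x : ℂ) + γ * Complex.I) := by
    rw [← sub_eq_zero.1 hz]
    simp [hg]
  rw [heq]
  calc ‖∫ x : ℝ, g ((x : ℂ) + γ * Complex.I)‖
      ≤ ∫ x : ℝ, ‖g ((x : ℂ) + γ * Complex.I)‖ := norm_integral_le_integral_norm _
    _ = Real.exp (-(a * γ)) * ∫ x : ℝ, ‖f ((x : ℂ) + γ * Complex.I)‖ := by
        simp_rw [hnorm]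
        rw [integral_const_mul]
    _ ≤ Real.exp (-(a * γ)) * (M * Real.exp (τ * γ)) :=
        mul_le_mul_of_nonneg_left (hbound γ h1) (Real.exp_pos _).le
    _ = M * Real.exp (-γ * (a - τ)) := by
        rw [mul_left_comm, ← Real.exp_add]
        congr 2
        ring
end

section
/- Let f : ℂ → ℂ be an entire function of exponential type τ ≥ 0 whose restriction to the real line satisfies ∫_{-∞}^{∞} |f(x)| dx = M < ∞. Then for every real y, ∫_{-∞}^{∞} |f(x + iy)| dx ≤ M·e^{τ |y|}. -/
open MeasureTheory Real Complex

open Filter Topology in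
lemma pl_aux (F : ℂ → ℂ) (σ C M : ℝ) (hσ : 0 ≤ σ) (hd : Differentiable ℂ F)
    (hF : ∀ z, ‖F z‖ ≤ C * Real.exp (σ * ‖z‖)) (hre : ∀ x : ℝ, ‖F x‖ ≤ M)
    (s : ℝ) (hs : |s| = 1) (w : ℝ) (hw : 0 ≤ w) :
    ‖F (w * (s * Complex.I))‖ ≤ M * Real.exp (σ * w) := by
  set G : ℂ → ℂ := fun z => F (z * (s * Complex.I)) * Complex.exp (-(σ * z)) with hG
  have hnorm : ∀ z : ℂ, ‖G z‖ = ‖F (z * (s * Complex.I))‖ * Real.exp (-(σ * z.re)) := by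
    intro z
    simp [hG, Complex.norm_exp]
  have hzn : ∀ z : ℂ, ‖z * (s * Complex.I)‖ = ‖z‖ := by
    intro z
    simp [hs]
  have hGd : Differentiable ℂ G := by
    intro z
    simp only [hG]
    refine DifferentiableAt.mul ?_ (by fun_prop)
    exact (hd _).comp z (by fun_prop : DifferentiableAt ℂ (fun z : ℂ => z * (s * Complex.I)) z)
  have key : ‖G w‖ ≤ M := by
    refine PhragmenLindelof.right_half_plane_of_bounded_on_real (z := (w : ℂ)) hGd.diffContOnCl
      ⟨1, by norm_num, σ, ?_⟩ ?_ ?_ (by simpa using hw)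
    · refine Asymptotics.IsBigO.of_bound C ?_
      refine mem_inf_of_right ?_
      intro z hz
      have hz : 0 < z.re := hz
      simp only [Set.mem_setOf_eq, Real.rpow_one, Real.norm_eq_abs, Real.abs_exp]
      rw [hnorm]
      have h1 := hF (z * (s * Complex.I))
      rw [hzn] at h1
      have h2 : Real.exp (-(σ * z.re)) ≤ 1 := by
        rw [Real.exp_le_one_iff]
        have := mul_nonneg hσ hz.le
        linarith
      exact (mul_le_of_le_one_right (norm_nonneg _) h2).trans h1
    · refine isBoundedUnder_of_eventually_le (a := C) ?_
      filter_upwards [eventually_ge_atTop 0] with x hx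
      rw [hnorm]
      have h1 := hF (x * (s * Complex.I))
      rw [hzn, Complex.norm_real, Real.norm_eq_abs, abs_of_nonneg hx] at h1
      rw [Real.exp_neg, ← div_eq_mul_inv, div_le_iff₀ (Real.exp_pos _)]
      simpa using h1
    · intro x
      rw [hnorm]
      have h : (x : ℂ) * Complex.I * (s * Complex.I) = ((-(x * s) : ℝ) : ℂ) := by
        push_cast
        linear_combination (x * s : ℂ) * Complex.I_mul_I
      rw [h]
      simpa using hre (-(x * s))
  rw [hnorm, Real.exp_neg, ← div_eq_mul_inv, div_le_iff₀ (Real.exp_pos _)] at key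
  simpa using key

lemma global_bound (f : ℂ → ℂ) (σ R : ℝ) (hσ : 0 ≤ σ) (hc : Continuous f)
    (h : ∀ z : ℂ, R ≤ ‖z‖ → ‖f z‖ ≤ Real.exp (σ * ‖z‖)) :
    ∃ C : ℝ, 0 ≤ C ∧ ∀ z, ‖f z‖ ≤ C * Real.exp (σ * ‖z‖) := by
  obtain ⟨C, hC⟩ := (isCompact_closedBall (0 : ℂ) R).exists_bound_of_continuousOn hc.continuousOn
  refine ⟨max C 1, by positivity, fun z => ?_⟩
  have h1 : 1 ≤ Real.exp (σ * ‖z‖) := Real.one_le_exp (by positivity)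
  rcases le_total R ‖z‖ with hz | hz
  · refine (h z hz).trans ?_
    exact le_mul_of_one_le_left (Real.exp_pos _).le (le_max_right _ _)
  · refine (hC z (by simpa using hz)).trans ((le_max_left C 1).trans ?_)
    exact le_mul_of_one_le_right (by positivity) h1

open Filter Topology in
lemma diff_aux (f : ℂ → ℂ) (hent : Differentiable ℂ f) (φ : ℝ → ℂ) (hφ : Measurable φ)
    (hφ1 : ∀ t, ‖φ t‖ ≤ 1) (N : ℝ) :
    Differentiable ℂ (fun z : ℂ => ∫ t in Set.Ioc (-N) N, φ t * f (z + t)) := by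
  intro z
  have hfc := hent.continuous
  have hdc : Continuous (deriv f) :=
    (hent.contDiff (n := 1)).continuous_deriv le_rfl
  obtain ⟨B, hB⟩ := (isCompact_closedBall (0 : ℂ) (‖z‖ + 1 + |N|)).exists_bound_of_continuousOn
    hdc.continuousOn
  obtain ⟨A, hA⟩ := (isCompact_closedBall (0 : ℂ) (‖z‖ + 1 + |N|)).exists_bound_of_continuousOn
    hfc.continuousOn
  have hmem : ∀ t ∈ Set.Ioc (-N) N, ∀ x ∈ Metric.ball z 1,
      x + (t : ℂ) ∈ Metric.closedBall (0 : ℂ) (‖z‖ + 1 + |N|) := by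
    intro t ht x hx
    rw [mem_closedBall_zero_iff]
    have h1 : ‖x‖ ≤ ‖z‖ + 1 := by
      have := norm_sub_norm_le x z
      rw [mem_ball_iff_norm] at hx
      linarith
    have h2 : |t| ≤ |N| := (abs_le.2 ⟨ht.1.le, ht.2⟩).trans (le_abs_self N)
    refine (norm_add_le _ _).trans ?_
    rw [Complex.norm_real, Real.norm_eq_abs]
    linarith
  have hmeas : ∀ g : ℂ → ℂ, Continuous g → ∀ x : ℂ,
      AEStronglyMeasurable (fun t : ℝ => φ t * g (x + t)) (volume.restrict (Set.Ioc (-N) N)) := by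
    intro g hg x
    refine (hφ.mul ?_).aestronglyMeasurable
    exact (by fun_prop : Continuous fun t : ℝ => g (x + t)).measurable
  have hz : z ∈ Metric.ball z 1 := Metric.mem_ball_self one_pos
  have := hasDerivAt_integral_of_dominated_loc_of_deriv_le (𝕜 := ℂ)
    (μ := volume.restrict (Set.Ioc (-N) N)) (F := fun (z : ℂ) (t : ℝ) => φ t * f (z + t))
    (F' := fun (z : ℂ) (t : ℝ) => φ t * deriv f (z + t)) (x₀ := z) (s := Metric.ball z 1)
    (bound := fun _ => B) (Metric.ball_mem_nhds z one_pos)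
    (Eventually.of_forall fun x => hmeas f hfc x)
    (by
      refine Integrable.of_bound (hmeas f hfc z) A ?_
      filter_upwards [ae_restrict_mem measurableSet_Ioc] with t ht
      rw [norm_mul]
      exact (mul_le_of_le_one_left (norm_nonneg _) (hφ1 t)).trans (hA _ (hmem t ht z hz)))
    (hmeas _ hdc z)
    (by
      filter_upwards [ae_restrict_mem measurableSet_Ioc] with t ht x hx
      rw [norm_mul]
      exact (mul_le_of_le_one_left (norm_nonneg _) (hφ1 t)).trans (hB _ (hmem t ht x hx)))
    (integrable_const _)
    (by
      refine Eventually.of_forall fun t x _ => ?_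
      exact ((hent (x + t)).hasDerivAt.comp_add_const x (t : ℂ)).const_mul (φ t))
  exact this.2.differentiableAt

open Filter Topology in
lemma main_aux (f : ℂ → ℂ) (τ : ℝ) (hτ : 0 ≤ τ) (hent : Differentiable ℂ f)
    (htype : ExpType τ f) (hint : Integrable (fun x : ℝ => f (x : ℂ)))
    (y N : ℝ) (hN : 0 ≤ N) :
    (∫ x in Set.Ioc (-N) N, ‖f ((x : ℂ) + y * Complex.I)‖)
      ≤ (∫ x : ℝ, ‖f (x : ℂ)‖) * Real.exp (τ * |y|) := by
  set M := ∫ x : ℝ, ‖f (x : ℂ)‖ with hM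
  have hfc := hent.continuous
  set φ : ℝ → ℂ := fun t =>
    (starRingEnd ℂ) (f (y * Complex.I + t)) / (‖f (y * Complex.I + t)‖ : ℂ) with hφdef
  have hφ : Measurable φ := by
    refine Measurable.div ?_ ?_
    · exact (Complex.continuous_conj.comp
        (by fun_prop : Continuous fun t : ℝ => f (y * Complex.I + t))).measurable
    · exact (by fun_prop : Continuous fun t : ℝ => (‖f (y * Complex.I + t)‖ : ℂ)).measurable
  have hφ1 : ∀ t, ‖φ t‖ ≤ 1 := by
    intro t
    simp only [hφdef, norm_div, RCLike.norm_conj, Complex.norm_real, norm_norm]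
    exact div_self_le_one _
  have hφf : ∀ t : ℝ, φ t * f (y * Complex.I + t) = (‖f (y * Complex.I + t)‖ : ℂ) := by
    intro t
    by_cases h : f (y * Complex.I + t) = 0
    · simp [h]
    · have h' : (‖f (y * Complex.I + t)‖ : ℂ) ≠ 0 := by simpa using h
      simp only [hφdef]
      rw [div_mul_eq_mul_div, div_eq_iff h', mul_comm, Complex.mul_conj, Complex.normSq_eq_norm_sq]
      push_cast
      ring
  set F : ℂ → ℂ := fun z : ℂ => ∫ t in Set.Ioc (-N) N, φ t * f (z + t) with hFdef
  have hFd : Differentiable ℂ F := diff_aux f hent φ hφ hφ1 N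
  have hFre : ∀ x : ℝ, ‖F x‖ ≤ M := by
    intro x
    have hi : Integrable (fun t : ℝ => ‖f ((x : ℂ) + t)‖) := by
      have := (hint.comp_add_left x).norm
      simpa using this
    have e : M = ∫ t : ℝ, ‖f ((x : ℂ) + t)‖ := by
      have := integral_add_left_eq_self (μ := volume) (fun t : ℝ => ‖f (t : ℂ)‖) x
      rw [hM, ← this]
      simp
    calc ‖F x‖ ≤ ∫ t in Set.Ioc (-N) N, ‖f ((x : ℂ) + t)‖ := by
          refine norm_integral_le_of_norm_le hi.integrableOn (Eventually.of_forall fun t => ?_)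
          rw [norm_mul]
          exact mul_le_of_le_one_left (norm_nonneg _) (hφ1 t)
      _ ≤ ∫ t : ℝ, ‖f ((x : ℂ) + t)‖ :=
          setIntegral_le_integral hi (Eventually.of_forall fun t => norm_nonneg _)
      _ = M := e.symm
  have hval : ‖F (y * Complex.I)‖ = ∫ x in Set.Ioc (-N) N, ‖f ((x : ℂ) + y * Complex.I)‖ := by
    simp only [hFdef, hφf]
    rw [integral_complex_ofReal, Complex.norm_real, Real.norm_eq_abs, abs_of_nonneg]
    · simp only [add_comm]
    · exact integral_nonneg fun t => norm_nonneg _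
  have hε : ∀ ε > 0, ‖F (y * Complex.I)‖ ≤ M * Real.exp ((τ + ε) * |y|) := by
    intro ε hε
    obtain ⟨R, -, hR⟩ := htype ε hε
    have hσ : 0 ≤ τ + ε := by linarith
    obtain ⟨C, hC0, hC⟩ := global_bound f (τ + ε) R hσ hfc hR
    have hFb : ∀ z, ‖F z‖ ≤ (C * Real.exp ((τ + ε) * N) * volume.real (Set.Ioc (-N) N))
        * Real.exp ((τ + ε) * ‖z‖) := by
      intro z
      have : ‖F z‖ ≤ (C * Real.exp ((τ + ε) * (‖z‖ + N))) * volume.real (Set.Ioc (-N) N) := by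
        refine norm_setIntegral_le_of_norm_le_const (by simp) fun t ht => ?_
        rw [norm_mul]
        refine (mul_le_of_le_one_left (norm_nonneg _) (hφ1 t)).trans ((hC _).trans ?_)
        have h3 : ‖z + (t : ℂ)‖ ≤ ‖z‖ + N := by
          refine (norm_add_le _ _).trans ?_
          rw [Complex.norm_real, Real.norm_eq_abs]
          have := abs_le.2 ⟨ht.1.le, ht.2⟩
          linarith
        gcongr
      rw [mul_add, Real.exp_add] at this
      linarith
    obtain ⟨s, hs, hsy⟩ : ∃ s : ℝ, |s| = 1 ∧ y = |y| * s := by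
      rcases le_total 0 y with h | h
      · exact ⟨1, by simp, by simp [abs_of_nonneg h]⟩
      · exact ⟨-1, by simp, by simp [abs_of_nonpos h]⟩
    have := pl_aux F (τ + ε) _ M hσ hFd hFb hFre s hs |y| (abs_nonneg y)
    have e : (y : ℂ) * Complex.I = (|y| : ℝ) * (s * Complex.I) := by
      rw [← mul_assoc, ← Complex.ofReal_mul, ← hsy]
    rwa [e]
  rw [← hval]
  have hlim : Tendsto (fun ε : ℝ => M * Real.exp ((τ + ε) * |y|)) (𝓝[>] 0)
      (𝓝 (M * Real.exp (τ * |y|))) := by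
    have : Continuous (fun ε : ℝ => M * Real.exp ((τ + ε) * |y|)) := by fun_prop
    have := this.tendsto 0
    simp only [add_zero] at this
    exact this.mono_left nhdsWithin_le_nhds
  exact ge_of_tendsto hlim (by filter_upwards [self_mem_nhdsWithin] with ε h using hε ε h)

/-- **Plancherel–Pólya-type estimate.** If `f` is entire of exponential type `τ ≥ 0`
and its restriction to the real line is integrable with `∫ |f(x)| dx = M`, then for
every real `y` the integral of `|f|` along the horizontal line at height `y`
is at most `M e^{τ|y|}`. -/
theorem integral_abs_horizontal_line_le
    (f : ℂ → ℂ) (τ : ℝ) (hτ : 0 ≤ τ)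
    (hent : Differentiable ℂ f)
    (htype : ExpType τ f)
    (hint : Integrable (fun x : ℝ => f (x : ℂ)))
    (M : ℝ) (hM : ∫ x : ℝ, ‖f (x : ℂ)‖ = M)
    (y : ℝ) :
    (∫ x : ℝ, ‖f ((x : ℂ) + y * Complex.I)‖) ≤ M * Real.exp (τ * |y|) := by
  subst hM
  by_cases hi : Integrable (fun x : ℝ => ‖f ((x : ℂ) + y * Complex.I)‖)
  · have hlim := intervalIntegral_tendsto_integral hi Filter.tendsto_neg_atTop_atBot Filter.tendsto_id
    refine le_of_tendsto hlim ?_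
    filter_upwards [Filter.eventually_ge_atTop 0] with N hN
    rw [intervalIntegral.integral_of_le (by simp only [id]; linarith)]
    exact main_aux f τ hτ hent htype hint y N hN
  · rw [integral_undef hi]
    exact mul_nonneg (integral_nonneg fun x => norm_nonneg _) (Real.exp_pos _).le
end

section
/- Let α > 0 and β > 0. The function φ : ℂ → ℂ defined by φ(z) = 1/(Γ(α + βz) · Γ(α − βz)), where Γ is the complex Gamma function, is entire and of exponential type πβ; that is, for every ε > 0 there exists R > 0 such that |φ(z)| ≤ exp((πβ + ε)·|z|) for all |z| ≥ R. -/
open Real Complex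

lemma aux_norm_inv_Gamma (n : ℕ) : ∀ s : ℂ,
    ‖(Complex.Gamma s)⁻¹‖ ≤ (‖s‖ + n) ^ n * ‖(Complex.Gamma (s + n))⁻¹‖ := by
  induction n with
  | zero => intro s; simp
  | succ n ih =>
    intro s
    have h := ih (s + 1)
    rw [Complex.one_div_Gamma_eq_self_mul_one_div_Gamma_add_one s, norm_mul]
    have e : s + 1 + (n : ℂ) = s + ((n + 1 : ℕ) : ℂ) := by push_cast; ring
    rw [e] at h
    have h1 : ‖s + 1‖ ≤ ‖s‖ + 1 := by simpa using norm_add_le s 1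
    have h2 : (‖s + 1‖ + n) ^ n ≤ (‖s‖ + ((n + 1 : ℕ) : ℝ)) ^ n := by
      apply pow_le_pow_left₀ (by positivity)
      push_cast; linarith
    have h3 : ‖s‖ ≤ ‖s‖ + ((n + 1 : ℕ) : ℝ) := by
      have : (0 : ℝ) ≤ ((n + 1 : ℕ) : ℝ) := by positivity
      linarith
    calc ‖s‖ * ‖(Complex.Gamma (s + 1))⁻¹‖
        ≤ (‖s‖ + ((n + 1 : ℕ) : ℝ)) * ((‖s‖ + ((n + 1 : ℕ) : ℝ)) ^ n *
            ‖(Complex.Gamma (s + ((n + 1 : ℕ) : ℂ)))⁻¹‖) := by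
          refine mul_le_mul h3 (h.trans ?_) (norm_nonneg _) (by positivity)
          exact mul_le_mul_of_nonneg_right h2 (norm_nonneg _)
      _ = _ := by rw [pow_succ]; ring

lemma aux_norm_Gamma (n : ℕ) : ∀ s : ℂ, (∀ k : ℕ, k < n → 1 ≤ ‖s + k‖) →
    ‖Complex.Gamma s‖ ≤ ‖Complex.Gamma (s + n)‖ := by
  induction n with
  | zero => intro s _; simp
  | succ n ih =>
    intro s hs
    refine (ih s fun k hk => hs k (by omega)).trans ?_
    have h1 := hs n (by omega)
    have h0 : s + n ≠ 0 := by
      intro h; rw [h] at h1; norm_num at h1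
    have e : s + ((n + 1 : ℕ) : ℂ) = s + n + 1 := by push_cast; ring
    rw [e, Complex.Gamma_add_one _ h0, norm_mul]
    nlinarith [norm_nonneg (Complex.Gamma (s + n))]

lemma aux_ratio (c : ℝ) (hc : 0 < c) : ∃ K : ℝ, 0 ≤ K ∧ ∀ s : ℂ, 1 ≤ s.re →
    ‖Complex.Gamma s‖ ≤ K * ‖Complex.Gamma (s + c)‖ := by
  have hi := (Complex.betaIntegral_convergent (u := 1) (v := (c : ℂ)) (by simp) (by simpa using hc)).norm
  have hG : 0 < ‖Complex.Gamma c‖ :=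
    norm_pos_iff.2 (Complex.Gamma_ne_zero_of_re_pos (by simpa using hc))
  set K := ∫ x in (0:ℝ)..1, ‖(x : ℂ) ^ ((1 : ℂ) - 1) * (1 - (x : ℂ)) ^ ((c : ℂ) - 1)‖ with hK
  have hK0 : 0 ≤ K := intervalIntegral.integral_nonneg (by norm_num) fun _ _ => norm_nonneg _
  refine ⟨K / ‖Complex.Gamma c‖, by positivity, fun s hs => ?_⟩
  have hB := Complex.Gamma_mul_Gamma_eq_betaIntegral (s := s) (t := c) (by linarith) (by simpa using hc)
  have hb : ‖Complex.betaIntegral s c‖ ≤ K := by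
    unfold Complex.betaIntegral
    refine intervalIntegral.norm_integral_le_of_norm_le (by norm_num) ?_ hi
    refine Filter.Eventually.of_forall fun x hx => ?_
    rw [norm_mul, norm_mul]
    refine mul_le_mul_of_nonneg_right ?_ (norm_nonneg _)
    rw [Complex.norm_cpow_eq_rpow_re_of_pos hx.1]
    simp only [sub_self, Complex.cpow_zero, norm_one]
    exact Real.rpow_le_one hx.1.le hx.2 (by simpa using hs)
  have := congrArg norm hB
  rw [norm_mul, norm_mul] at this
  rw [div_mul_eq_mul_div, le_div_iff₀ hG, this, mul_comm]
  exact mul_le_mul_of_nonneg_right hb (norm_nonneg _)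

lemma aux_sin (z : ℂ) : ‖Complex.sin z‖ ≤ Real.exp ‖z‖ := by
  have h1 := Complex.norm_exp_le_exp_norm (-z * I)
  have h2 := Complex.norm_exp_le_exp_norm (z * I)
  have h3 := norm_sub_le (Complex.exp (-z * I)) (Complex.exp (z * I))
  simp only [norm_mul, norm_neg, Complex.norm_I, mul_one] at h1 h2
  rw [Complex.sin, norm_div, norm_mul, Complex.norm_I, mul_one, Complex.norm_ofNat]
  linarith

lemma aux_half (α : ℝ) (hα : 0 < α) : ∃ C R : ℝ, ∃ N : ℕ, 0 ≤ C ∧ ∀ w : ℂ, 0 ≤ w.re → R ≤ ‖w‖ →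
    ‖(Complex.Gamma (α + w))⁻¹‖ * ‖(Complex.Gamma (α - w))⁻¹‖
      ≤ C * ‖w‖ ^ N * Real.exp (π * ‖w‖) := by
  obtain ⟨M, hM⟩ := exists_nat_ge α
  obtain ⟨K, hK0, hK⟩ := aux_ratio (2 * α) (by linarith)
  refine ⟨2 ^ (M + 1) * K * (Real.exp (π * α) / π), α + M + 2, M + 1, by positivity, ?_⟩
  intro w hw hR
  have hna : ‖(α : ℂ)‖ = α := by simp [abs_of_pos hα]
  have hM0 : (0 : ℝ) ≤ M := by positivity
  -- lower bounds
  have hlow : ∀ k : ℕ, k < M → 1 ≤ ‖1 - (α - w) + k‖ := by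
    intro k hk
    have h1 : ‖w‖ ≤ ‖1 - (α - w) + k‖ + ‖(α : ℂ) - (k + 1 : ℕ)‖ := by
      have := norm_add_le (1 - (α - w) + k) ((α : ℂ) - (k + 1 : ℕ))
      have e : (1 - (α - w) + k) + ((α : ℂ) - (k + 1 : ℕ)) = w := by push_cast; ring
      rwa [e] at this
    have h2 := norm_sub_le (α : ℂ) (k + 1 : ℕ)
    rw [hna, Complex.norm_natCast] at h2
    have h3 : ((k + 1 : ℕ) : ℝ) ≤ M := by exact_mod_cast hk
    linarith
  set s : ℂ := 1 - (α - w) with hs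
  have hsre : 1 ≤ (s + M).re := by simp [hs]; linarith
  have hsne : Complex.Gamma s ≠ 0 := by
    have hGM : Complex.Gamma (s + M) ≠ 0 := Complex.Gamma_ne_zero_of_re_pos (by linarith)
    apply Complex.Gamma_ne_zero
    intro m hm
    by_cases hk : m < M
    · have := hlow m hk
      rw [hm] at this; norm_num at this
    · rw [hm] at hsre
      simp at hsre
      have : (M : ℝ) ≤ m := by exact_mod_cast not_lt.1 hk
      linarith
  have hrefl := Complex.Gamma_mul_Gamma_one_sub (α - w)
  rw [← hs] at hrefl
  have hsin : ‖Complex.sin (π * (α - w))‖ ≤ Real.exp (π * α) * Real.exp (π * ‖w‖) := by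
    refine (aux_sin _).trans ?_
    rw [← Real.exp_add, Real.exp_le_exp, norm_mul, Complex.norm_real, Real.norm_eq_abs,
      abs_of_pos Real.pi_pos, ← mul_add]
    have := norm_sub_le (α : ℂ) w
    rw [hna] at this
    exact mul_le_mul_of_nonneg_left this Real.pi_pos.le
  have hpi : (π : ℂ) ≠ 0 := by exact_mod_cast Real.pi_ne_zero
  have h1 : ‖(Complex.Gamma (α - w))⁻¹‖ ≤
      Real.exp (π * α) * Real.exp (π * ‖w‖) / π * ‖Complex.Gamma s‖ := by
    by_cases ha : Complex.Gamma (α - w) = 0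
    · rw [ha]; simp; positivity
    · have hsn : Complex.sin (π * (α - w)) ≠ 0 := by
        intro h; rw [h, div_zero] at hrefl
        exact (mul_ne_zero ha hsne) hrefl
      have e : (Complex.Gamma (α - w))⁻¹ = Complex.sin (π * (α - w)) / π * Complex.Gamma s := by
        rw [eq_div_iff hsn] at hrefl
        generalize Complex.sin (π * (α - w)) = S at *
        field_simp
        linear_combination -hrefl
      rw [e, norm_mul, norm_div, Complex.norm_real, Real.norm_eq_abs, abs_of_pos Real.pi_pos]
      gcongr
  have h2 := aux_norm_Gamma M s hlow
  have h3 := hK (s + M) hsre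
  have h4 := aux_norm_inv_Gamma (M + 1) (α + w)
  have e2 : s + M + ((2 * α : ℝ) : ℂ) = α + w + ((M + 1 : ℕ) : ℂ) := by
    rw [hs]; push_cast; ring
  rw [e2] at h3
  set G := Complex.Gamma (α + w + ((M + 1 : ℕ) : ℂ)) with hGdef
  have hG : G ≠ 0 := Complex.Gamma_ne_zero_of_re_pos (by simp; linarith)
  have h5 : (‖α + w‖ + ((M + 1 : ℕ) : ℝ)) ^ (M + 1) ≤ (2 * ‖w‖) ^ (M + 1) := by
    apply pow_le_pow_left₀ (by positivity)
    have := norm_add_le (α : ℂ) w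
    rw [hna] at this
    push_cast; linarith
  calc _ ≤ ((2 * ‖w‖) ^ (M + 1) * ‖G⁻¹‖) *
        (Real.exp (π * α) * Real.exp (π * ‖w‖) / π * (K * ‖G‖)) := by
        refine mul_le_mul (h4.trans ?_) (h1.trans ?_) (norm_nonneg _) (by positivity)
        · exact mul_le_mul_of_nonneg_right h5 (norm_nonneg _)
        · exact mul_le_mul_of_nonneg_left (h2.trans h3) (by positivity)
    _ = _ := by
        have : ‖G‖ ≠ 0 := norm_ne_zero_iff.2 hG
        rw [norm_inv, mul_pow]
        field_simp

/-- **The reciprocal double-Gamma function is entire of exponential type `πβ`.**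
For `α, β > 0`, `φ(z) = 1/(Γ(α + βz)Γ(α − βz))` is entire and for every `ε > 0` there
is `R > 0` with `|φ(z)| ≤ exp((πβ + ε)|z|)` for all `|z| ≥ R`. -/
theorem one_div_Gamma_mul_Gamma_entire_expType
    (α β : ℝ) (hα : 0 < α) (hβ : 0 < β)
    (φ : ℂ → ℂ)
    (hφ : ∀ z : ℂ, φ z = 1 / (Complex.Gamma (α + β * z) * Complex.Gamma (α - β * z))) :
    Differentiable ℂ φ ∧
      ∀ ε > 0, ∃ R > 0, ∀ z : ℂ, R ≤ ‖z‖ →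
        ‖φ z‖ ≤ Real.exp ((Real.pi * β + ε) * ‖z‖) := by
  have hφ' : ∀ z, φ z = (Complex.Gamma (α + β * z))⁻¹ * (Complex.Gamma (α - β * z))⁻¹ := by
    intro z; rw [hφ, one_div, mul_inv]
  constructor
  · have : φ = fun z => (Complex.Gamma (α + β * z))⁻¹ * (Complex.Gamma (α - β * z))⁻¹ := funext hφ'
    rw [this]
    have hd := Complex.differentiable_one_div_Gamma
    exact (hd.comp (g := fun s : ℂ => (Complex.Gamma s)⁻¹) (f := fun z : ℂ => α + β * z)
      (by fun_prop)).mul (hd.comp (f := fun z : ℂ => α - β * z) (by fun_prop))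
  · intro ε hε
    obtain ⟨C, R, N, hC, h⟩ := aux_half α hα
    have h' : ∀ w : ℂ, R ≤ ‖w‖ →
        ‖(Complex.Gamma (α + w))⁻¹‖ * ‖(Complex.Gamma (α - w))⁻¹‖
          ≤ C * ‖w‖ ^ N * Real.exp (π * ‖w‖) := by
      intro w hw
      rcases le_total 0 w.re with h0 | h0
      · exact h w h0 hw
      · have := h (-w) (by simpa using h0) (by simpa using hw)
        rw [norm_neg, sub_neg_eq_add, ← sub_eq_add_neg, mul_comm ‖_‖] at this
        exact this
    have ho := (isLittleO_pow_exp_pos_mul_atTop N (div_pos hε hβ)).bound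
      (c := (C + 1)⁻¹) (by positivity)
    obtain ⟨R', hR'⟩ := Filter.eventually_atTop.1 ho
    refine ⟨max 1 (max R R' / β), by positivity, fun z hz => ?_⟩
    have hw : ‖(β : ℂ) * z‖ = β * ‖z‖ := by simp [abs_of_pos hβ]
    have hz2 : max R R' ≤ β * ‖z‖ := by
      have := (le_max_right _ _).trans hz
      rw [div_le_iff₀ hβ] at this; linarith
    have h1 := h' (β * z) (by rw [hw]; exact (le_max_left _ _).trans hz2)
    have h2 := hR' (β * ‖z‖) ((le_max_right _ _).trans hz2)
    rw [hw] at h1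
    rw [hφ', norm_mul]
    refine h1.trans ?_
    rw [Real.norm_eq_abs, Real.norm_eq_abs, Real.abs_exp, abs_of_nonneg (by positivity)] at h2
    have e : ε / β * (β * ‖z‖) = ε * ‖z‖ := by field_simp
    rw [e] at h2
    have h3 : C * (β * ‖z‖) ^ N ≤ Real.exp (ε * ‖z‖) := by
      have hp : 0 ≤ (β * ‖z‖) ^ N := by positivity
      rw [inv_mul_eq_div, le_div_iff₀ (by positivity)] at h2
      linarith
    rw [show (π * β + ε) * ‖z‖ = ε * ‖z‖ + π * (β * ‖z‖) by ring, Real.exp_add]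
    exact mul_le_mul_of_nonneg_right h3 (Real.exp_pos _).le
end

section
/- Let α > 1 and β > 0. The function φ : ℝ → ℝ defined by φ(x) = 1/(Γ(α + βx) · Γ(α − βx)), where Γ is the real Gamma function, is both integrable and square-integrable on ℝ: ∫_{-∞}^{∞} |φ(x)| dx < ∞ and ∫_{-∞}^{∞} |φ(x)|² dx < ∞. -/
open MeasureTheory Real

lemma aux_cont : Continuous (fun x : ℝ => (Real.Gamma x)⁻¹) := by
  have h := Complex.differentiable_one_div_Gamma.continuous
  have h2 : Continuous (fun x : ℝ => ((Complex.Gamma (x : ℂ))⁻¹).re) :=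
    Complex.continuous_re.comp (h.comp Complex.continuous_ofReal)
  convert h2 using 2 with x
  rw [Complex.Gamma_ofReal, ← Complex.ofReal_inv, Complex.ofReal_re]

lemma aux_ratio_s10 (s h : ℝ) (hs : 1 < s) (hh : 0 < h) :
    (s - 1) ^ h * Real.Gamma s ≤ Real.Gamma (s + h) := by
  have h1 := Real.convexOn_log_Gamma.slope_mono_adjacent (x := s - 1) (y := s) (z := s + h)
    (by simp; linarith) (by simp; linarith) (by linarith) (by linarith)
  have hG : Real.Gamma s = (s - 1) * Real.Gamma (s - 1) := by
    have := Real.Gamma_add_one (s := s - 1) (by linarith)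
    simpa using this
  have p0 : 0 < Real.Gamma (s - 1) := Real.Gamma_pos_of_pos (by linarith)
  have p1 : 0 < Real.Gamma s := Real.Gamma_pos_of_pos (by linarith)
  have p2 : 0 < Real.Gamma (s + h) := Real.Gamma_pos_of_pos (by linarith)
  have hl : Real.log (Real.Gamma s) = Real.log (s - 1) + Real.log (Real.Gamma (s - 1)) := by
    rw [hG, Real.log_mul (by linarith) p0.ne']
  simp only [Function.comp] at h1
  rw [show s - (s - 1) = 1 by ring, show s + h - s = h by ring, div_one, le_div_iff₀ hh, hl] at h1
  have hp : 0 < (s - 1) ^ h := Real.rpow_pos_of_pos (by linarith) _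
  rw [← Real.log_le_log_iff (by positivity) p2, Real.log_mul hp.ne' p1.ne',
    Real.log_rpow (by linarith), hl]
  linarith

lemma aux_bound (α t : ℝ) (hα : 1 < α) (ht : 2 * α < t) :
    |(Real.Gamma (α + t))⁻¹ * (Real.Gamma (α - t))⁻¹| ≤
      (2:ℝ) ^ (2 * α - 1) * t ^ (-(2 * α - 1)) := by
  have hr := aux_ratio_s10 (t + 1 - α) (2 * α - 1) (by linarith) (by linarith)
  rw [show t + 1 - α + (2 * α - 1) = α + t by ring, show t + 1 - α - 1 = t - α by ring] at hr
  have ps : 0 < Real.Gamma (t + 1 - α) := Real.Gamma_pos_of_pos (by linarith)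
  have pb : 0 < Real.Gamma (α + t) := Real.Gamma_pos_of_pos (by linarith)
  have href := Real.Gamma_mul_Gamma_one_sub (α - t)
  rw [show 1 - (α - t) = t + 1 - α by ring] at href
  have e : (Real.Gamma (α - t))⁻¹ =
      Real.Gamma (t + 1 - α) * (Real.sin (π * (α - t)) / π) := by
    rw [← inv_div, ← href, mul_inv]
    field_simp
  have hsin : |Real.sin (π * (α - t)) / π| ≤ 1 := by
    rw [abs_div, abs_of_pos Real.pi_pos, div_le_one Real.pi_pos]
    linarith [Real.abs_sin_le_one (π * (α - t)), Real.pi_gt_three]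
  have hpow : (t / 2) ^ (2 * α - 1) ≤ (t - α) ^ (2 * α - 1) :=
    Real.rpow_le_rpow (by linarith) (by linarith) (by linarith)
  have ht0 : 0 < t := by linarith
  have e2 : (2:ℝ) ^ (2 * α - 1) * t ^ (-(2 * α - 1)) = ((t / 2) ^ (2 * α - 1))⁻¹ := by
    rw [Real.div_rpow ht0.le (by norm_num), Real.rpow_neg ht0.le, inv_div, div_eq_mul_inv]
  have hq : 0 < (t / 2) ^ (2 * α - 1) := Real.rpow_pos_of_pos (by linarith) _
  rw [e2, e, abs_mul, abs_mul, abs_of_pos ps, abs_of_pos (inv_pos.2 pb)]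
  calc (Real.Gamma (α + t))⁻¹ * (Real.Gamma (t + 1 - α) * |Real.sin (π * (α - t)) / π|)
      ≤ (Real.Gamma (α + t))⁻¹ * (Real.Gamma (t + 1 - α) * 1) := by gcongr
    _ ≤ ((t / 2) ^ (2 * α - 1))⁻¹ := by
      rw [mul_one, inv_mul_le_iff₀ pb, ← div_eq_mul_inv, le_div_iff₀ hq]
      nlinarith

lemma aux_int (f : ℝ → ℝ) (hc : Continuous f) (he : ∀ x, f (-x) = f x) (p : ℝ) (hp : 1 < p)
    (hO : f =O[Filter.atTop] fun t => t ^ (-p)) : Integrable f := by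
  refine hc.locallyIntegrable.integrable_of_isBigO_atTop_of_norm_isNegInvariant
    (g := fun t => t ^ (-p)) ?_ hO ?_
  · exact Filter.Eventually.of_forall fun x => by simp [he]
  · exact ⟨Set.Ioi 1, Filter.Ioi_mem_atTop 1, integrableOn_Ioi_rpow_of_lt (by linarith) one_pos⟩

/-- **Integrability of the reciprocal double-Gamma wave function.** For `α > 1` and
`β > 0`, the function `φ(x) = 1/(Γ(α + βx)Γ(α − βx))` is integrable and
square-integrable on ℝ. -/
theorem one_div_Gamma_mul_Gamma_integrable_sq_integrable
    (α β : ℝ) (hα : 1 < α) (hβ : 0 < β)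
    (φ : ℝ → ℝ)
    (hφ : ∀ x : ℝ, φ x = 1 / (Real.Gamma (α + β * x) * Real.Gamma (α - β * x))) :
    Integrable φ ∧ Integrable (fun x : ℝ => |φ x| ^ 2) := by
  let g : ℝ → ℝ := fun t => (Real.Gamma (α + t))⁻¹ * (Real.Gamma (α - t))⁻¹
  have hφg : φ = fun x => g (β * x) := by
    funext x
    rw [hφ, one_div, mul_inv]
  have gc : Continuous g :=
    (aux_cont.comp (continuous_const.add continuous_id)).mul
      (aux_cont.comp (continuous_const.sub continuous_id))
  have ge : ∀ x, g (-x) = g x := by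
    intro x
    simp only [g, sub_neg_eq_add, ← sub_eq_add_neg]
    ring
  have gO : g =O[Filter.atTop] fun t => t ^ (-(2 * α - 1)) := by
    refine Asymptotics.IsBigO.of_bound ((2:ℝ) ^ (2 * α - 1)) ?_
    filter_upwards [Filter.eventually_gt_atTop (2 * α)] with t ht
    have h0 : 0 ≤ t ^ (-(2 * α - 1)) := Real.rpow_nonneg (by linarith) _
    rw [Real.norm_eq_abs, Real.norm_eq_abs, abs_of_nonneg h0]
    exact aux_bound α t hα ht
  have i1 : Integrable g := aux_int g gc ge _ (by linarith) gO
  have i2 : Integrable (fun t => |g t| ^ 2) := by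
    refine aux_int _ (gc.abs.pow 2) (fun x => by rw [ge]) (2 * (2 * α - 1)) (by linarith) ?_
    refine ((gO.norm_left.pow 2).congr' (Filter.Eventually.of_forall fun x => by simp) ?_)
    filter_upwards [Filter.eventually_gt_atTop 0] with t ht
    rw [← Real.rpow_natCast, ← Real.rpow_mul ht.le]
    congr 1
    push_cast
    ring
  rw [hφg]
  exact ⟨i1.comp_mul_left' hβ.ne', i2.comp_mul_left' hβ.ne'⟩
end
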